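/- Let F be a field and n ≥ 3. The length of the bicirculant algebra C_n(F) equals n − 1; precisely, every generating set S of C_n(F) satisfies l(S) ≤ n − 1, and there exists a generating set S of C_n(F) with l(S) = n − 1. -/

import Mathlib

/-- `Lk F S k` is the `F`-linear span of all products of at most `k` elements of `S`
(the empty product `1` has length `0`); equivalently `V ^ k` with `V = span F ({1} ∪ S)`. -/
noncomputable def Lk (F : Type*) [Field F] {A : Type*} [Ring A] [Algebra F A]
    (S : Set A) (k : ℕ) : Submodule F A :=
  (Submodule.span F ({1} ∪ S)) ^ k

/-- The length of a generating set `S`: the least `k` with `Lk F S k = ⊤`. -/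
noncomputable def lenS (F : Type*) [Field F] {A : Type*} [Ring A] [Algebra F A]
    (S : Set A) : ℕ :=
  sInf {k | Lk F S k = ⊤}

/-- `mAlg F A` is the maximal degree over all `τ ∈ A` of the minimal polynomial of `τ`. -/
noncomputable def mAlg (F A : Type*) [Field F] [Ring A] [Algebra F A] : ℕ :=
  sSup {d | ∃ τ : A, d = (minpoly F τ).natDegree}

/-- The circulant permutation matrix `A_n` (ones in positions `(i, i+1)` cyclically). -/
def Acirc (n : ℕ) (F : Type*) [Field F] : Matrix (Fin n) (Fin n) F :=
  Matrix.of fun i j => if (j : ℕ) = ((i : ℕ) + 1) % n then 1 else 0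

/-- The anti-circulant permutation matrix `B_n` (ones in positions `(i, n+1-i)`,
i.e. `i + j = n - 1` in 0-indexed coordinates). -/
def Bcirc (n : ℕ) (F : Type*) [Field F] : Matrix (Fin n) (Fin n) F :=
  Matrix.of fun i j => if (i : ℕ) + (j : ℕ) = n - 1 then 1 else 0

/-!
Write `V` for the span of `1` and a generating set `S` of an algebra `A`, so that `V ^ k` is
`Lk F S k`. Suppose `dim A ≤ 2m + 1` and that every element of `A` has a minimal polynomial of
degree at most `m + 1`. If each of the first `m` steps of the chain `V ^ k` gains at least two
dimensions, then `V ^ m = A` by counting. Otherwise some step gains at most one dimension; its gain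
is then spanned by a pure power `s ^ (k + 1)` with `s ∈ V`, the same `s` serves for all later
steps, and `s ^ (m + 1) ∈ V ^ m` stops the chain at `V ^ m`.

The elements of `C_n(F)` are the matrices with entries `c (i - j) + d (i + j)`. They satisfy
polynomials of degree `n`, and constant `c = -d` give a relation, so that `dim C_n(F) ≤ 2n - 1` and
`m = n - 1` is allowed. The bound is attained by two generating reflections: they are involutions,
so only alternating words matter and `dim Lk F S k ≤ 2k + 1`, while `dim C_n(F) ≥ 2n - 2`.
-/

open Module Submodule Matrix
open CoxeterSystem (alternatingWord alternatingWord_succ)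

/-! ### Powers of a subspace of an algebra -/

section Powers

lemma pow_le_pow_of_pow_succ_le {M : Type*} [Monoid M] [Preorder M] [MulLeftMono M]
    [MulRightMono M] {a : M} (h1 : 1 ≤ a) {k : ℕ} (h : a ^ (k + 1) ≤ a ^ k) (j : ℕ) :
    a ^ j ≤ a ^ k := by
  induction j with
  | zero => simpa using one_le_pow_of_one_le' h1 k
  | succ j ih =>
    calc a ^ (j + 1) = a ^ j * a := pow_succ a j
      _ ≤ a ^ k * a := mul_le_mul_left ih a
      _ = a ^ (k + 1) := (pow_succ a k).symm
      _ ≤ a ^ k := h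

lemma pow_succ_le_pow_add_pow_succ {R : Type*} [IdemSemiring R] {a b : R} (hba : b ≤ a) {k m : ℕ}
    (hkm : k ≤ m) (h : a ^ (k + 1) ≤ a ^ k + b ^ (k + 1)) :
    a ^ (m + 1) ≤ a ^ m + b ^ (m + 1) := by
  induction m, hkm using Nat.le_induction with
  | base => exact h
  | succ m _ ih =>
    have hmul : a * b ^ m ≤ a ^ m + b ^ (m + 1) :=
      calc a * b ^ m ≤ a * a ^ m := by gcongr
        _ = a ^ (m + 1) := (pow_succ' a m).symm
        _ ≤ a ^ m + b ^ (m + 1) := ih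
    calc a ^ (m + 1 + 1) = a * a ^ (m + 1) := pow_succ' a (m + 1)
      _ ≤ a * (a ^ m + b ^ (m + 1)) := by gcongr
      _ = a ^ (m + 1) + a * b ^ m * b := by rw [mul_add, ← pow_succ', pow_succ b, mul_assoc]
      _ ≤ a ^ (m + 1) + (a ^ m + b ^ (m + 1)) * b := by gcongr
      _ = a ^ (m + 1) + (a ^ m * b + b ^ (m + 1 + 1)) := by rw [add_mul, ← pow_succ b]
      _ ≤ a ^ (m + 1) + (a ^ m * a + b ^ (m + 1 + 1)) := by gcongr
      _ = a ^ (m + 1) + b ^ (m + 1 + 1) := by rw [← pow_succ, ← add_assoc, add_idem]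

lemma wcovBy_of_finrank_le_succ {K E : Type*} [DivisionRing K] [AddCommGroup E]
    [Module K E] {U W : Submodule K E} [FiniteDimensional K W] (hUW : U ≤ W)
    (h : finrank K W ≤ finrank K U + 1) : U ⩿ W := by
  refine ⟨hUW, fun X hUX hXW => ?_⟩
  have : FiniteDimensional K X := finiteDimensional_of_le hXW.le
  have := finrank_lt_finrank_of_lt hUX
  have := finrank_lt_finrank_of_lt hXW
  omega

lemma pow_succ_mem_of_natDegree_minpoly_le {R A : Type*} [CommRing R] [Nontrivial R] [Ring A]
    [Algebra R A] {V : Submodule R A} (h1 : 1 ≤ V) {s : A} (hs : s ∈ V) (hint : IsIntegral R s)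
    {m : ℕ} (hdeg : (minpoly R s).natDegree ≤ m + 1) : s ^ (m + 1) ∈ V ^ m := by
  set r : Polynomial R := Polynomial.X ^ (m + 1) %ₘ minpoly R s with hr
  have hrdeg : r.natDegree < m + 1 := by
    rcases eq_or_ne r 0 with h0 | h0
    · simp [h0]
    · exact (Polynomial.natDegree_lt_natDegree h0
        (Polynomial.degree_modByMonic_lt _ (minpoly.monic hint))).trans_le hdeg
  have hrs : s ^ (m + 1) = Polynomial.aeval s r := by
    rw [hr, Polynomial.aeval_modByMonic_eq_self_of_root (minpoly.aeval R s)]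
    simp
  rw [hrs, Polynomial.aeval_eq_sum_range' hrdeg]
  refine sum_mem fun i hi => smul_mem _ _ (pow_le_pow_right' h1 ?_ (pow_mem_pow V hs i))
  exact Nat.lt_succ_iff.1 (Finset.mem_range.1 hi)

section Semiring

variable {R A : Type*} [CommSemiring R] [Semiring A] [Algebra R A] {V : Submodule R A}

lemma pow_succ_eq_sup_span_singleton {k : ℕ} (hcov : V ^ k ⩿ V ^ (k + 1)) {x : A}
    (hx : x ∈ V ^ (k + 1)) (hxk : x ∉ V ^ k) : V ^ (k + 1) = V ^ k ⊔ span R {x} := by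
  have hle : V ^ k ⊔ span R {x} ≤ V ^ (k + 1) := sup_le hcov.le (by simpa using hx)
  refine ((hcov.eq_or_eq le_sup_left hle).resolve_left fun h => hxk ?_).symm
  exact h ▸ mem_sup_right (mem_span_singleton_self x)

lemma mul_notMem_pow_succ {k : ℕ} (hcov : V ^ k ⩿ V ^ (k + 1)) {s : A} (hs : s ∈ V)
    (hgrow : ¬ V ^ (k + 1) * span R {s} ≤ V ^ (k + 1)) {x : A} (hx : x ∈ V ^ (k + 1))
    (hxk : x ∉ V ^ k) : x * s ∉ V ^ (k + 1) := by
  intro hxs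
  apply hgrow
  have hsV : span R {s} ≤ V := by simpa using hs
  calc V ^ (k + 1) * span R {s} = V ^ k * span R {s} ⊔ span R {x * s} := by
        rw [pow_succ_eq_sup_span_singleton hcov hx hxk, Submodule.sup_mul, span_mul_span,
          Set.singleton_mul_singleton]
    _ ≤ V ^ k * V ⊔ span R {x * s} := by gcongr
    _ ≤ V ^ (k + 1) := sup_le (pow_succ V k).ge (by simpa using hxs)

/- A product of `k + 1` factors outside `V ^ k` stays outside `V ^ k` when its first factor is
dropped and `s` is appended; after `k + 1` such moves it has become `s ^ (k + 1)`. -/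
lemma exists_pow_succ_notMem {k : ℕ} (hcov : V ^ k ⩿ V ^ (k + 1))
    (hgrow : ¬ V ^ (k + 2) ≤ V ^ (k + 1)) : ∃ s ∈ V, s ^ (k + 1) ∉ V ^ k := by
  obtain ⟨s, hs, p, hp, hps⟩ : ∃ s ∈ V, ∃ p ∈ V ^ (k + 1), p * s ∉ V ^ (k + 1) := by
    by_contra! h
    exact hgrow ((pow_succ V (k + 1)).trans_le (Submodule.mul_le.2 fun p hp s hs => h s hs p hp))
  have hsgrow : ¬ V ^ (k + 1) * span R {s} ≤ V ^ (k + 1) := fun h =>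
    hps (h (mul_mem_mul hp (mem_span_singleton_self s)))
  have hreplace : ∀ j m : ℕ, m + j = k + 1 → ∃ q ∈ V ^ m, q * s ^ j ∉ V ^ k := by
    intro j
    induction j with
    | zero =>
      rintro m rfl
      refine ⟨p, hp, fun h => hps ?_⟩
      rw [pow_zero, mul_one] at h
      exact (pow_succ V k).ge (mul_mem_mul h hs)
    | succ j ih =>
      intro m hm
      obtain ⟨q, hq, hqs⟩ := ih (m + 1) (by omega)
      obtain ⟨t, ht, r, hr, htr⟩ : ∃ t ∈ V, ∃ r ∈ V ^ m, t * (r * s ^ j) ∉ V ^ k := by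
        by_contra! h
        have hle : V ^ (m + 1) ≤ (V ^ k).comap (LinearMap.mulRight R (s ^ j)) := by
          rw [pow_succ', Submodule.mul_le]
          intro t ht r hr
          simpa [mul_assoc] using h t ht r hr
        exact hqs (hle hq)
      have hmem : t * (r * s ^ j) ∈ V ^ (k + 1) := by
        rw [← hm, show m + (j + 1) = 1 + (m + j) by omega, pow_add, pow_one, pow_add]
        exact mul_mem_mul ht (mul_mem_mul hr (pow_mem_pow V hs j))
      refine ⟨r, hr, fun h => mul_notMem_pow_succ hcov hs hsgrow hmem htr ?_⟩
      rw [mul_assoc, mul_assoc, ← pow_succ, pow_succ' V]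
      exact mul_mem_mul ht h
  obtain ⟨q, hq, hqs⟩ := hreplace (k + 1) 0 (by omega)
  obtain ⟨c, rfl⟩ := Submodule.mem_one.1 (pow_zero V ▸ hq)
  refine ⟨s, hs, fun h => hqs ?_⟩
  simpa [← Algebra.smul_def] using smul_mem _ c h

end Semiring

section Field

variable {F A : Type*} [Field F] [Ring A] [Algebra F A] {V : Submodule F A}

lemma exists_pow_wcovBy_pow_succ [FiniteDimensional F A] [Nontrivial A] (h1 : 1 ≤ V) {m : ℕ}
    (h : finrank F ↥(V ^ m) ≤ 2 * m) : ∃ k < m, V ^ k ⩿ V ^ (k + 1) := by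
  induction m with
  | zero =>
    have hbot : V ^ 0 = ⊥ := Submodule.finrank_eq_zero.1 (by omega)
    have hmem : (1 : A) ∈ V ^ 0 := Submodule.one_le.1 (pow_zero V).ge
    rw [hbot, Submodule.mem_bot] at hmem
    exact absurd hmem one_ne_zero
  | succ m ih =>
    by_cases hm : finrank F ↥(V ^ m) ≤ 2 * m
    · obtain ⟨k, hk, hcov⟩ := ih hm
      exact ⟨k, by omega, hcov⟩
    · exact ⟨m, by omega,
        wcovBy_of_finrank_le_succ (pow_le_pow_right' h1 m.le_succ) (by omega)⟩

lemma pow_succ_le_pow_of_finrank_le [FiniteDimensional F A] (h1 : 1 ≤ V) {m : ℕ}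
    (hdim : finrank F A ≤ 2 * m + 1) (hpow : ∀ s ∈ V, s ^ (m + 1) ∈ V ^ m) :
    V ^ (m + 1) ≤ V ^ m := by
  by_contra hgrow
  have hne : V ^ m ≠ ⊤ := fun h => hgrow (h ▸ le_top)
  have : Nontrivial A := nontrivial_iff F |>.1 ⟨_, _, hne⟩
  have hlt : finrank F ↥(V ^ m) < finrank F A := finrank_lt hne
  obtain ⟨k, hk, hcov⟩ := exists_pow_wcovBy_pow_succ h1 (show finrank F ↥(V ^ m) ≤ 2 * m by omega)
  have hgrow' : ¬ V ^ (k + 2) ≤ V ^ (k + 1) := fun h =>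
    hgrow ((pow_le_pow_of_pow_succ_le h1 h _).trans (pow_le_pow_right' h1 hk))
  obtain ⟨s, hs, hsk⟩ := exists_pow_succ_notMem hcov hgrow'
  have hspan : ∀ i, span F {s} ^ i = span F {s ^ i} := fun i => by
    rw [span_pow, Set.singleton_pow]
  have hk' : V ^ (k + 1) ≤ V ^ k + span F {s} ^ (k + 1) := by
    rw [hspan]
    exact (pow_succ_eq_sup_span_singleton hcov (pow_mem_pow V hs _) hsk).le
  have hm := pow_succ_le_pow_add_pow_succ (by simpa using hs) hk.le hk'
  rw [hspan] at hm
  exact hgrow (hm.trans (sup_le le_rfl (by simpa using hpow s hs)))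

end Field

end Powers

/-! ### Lengths of generating sets -/

section Length

variable {F A : Type*} [Field F] [Ring A] [Algebra F A]

lemma one_le_span_one_union (S : Set A) : 1 ≤ span F ({1} ∪ S) :=
  Submodule.one_le.2 (subset_span (by simp))

lemma Lk_mono (S : Set A) : Monotone (Lk F S) :=
  pow_right_monotone (one_le_span_one_union S)

lemma Lk_succ (S : Set A) (k : ℕ) : Lk F S (k + 1) = Lk F S k * span F ({1} ∪ S) :=
  pow_succ _ k

lemma mul_mem_Lk_succ {S : Set A} {k : ℕ} {x s : A} (hx : x ∈ Lk F S k) (hs : s ∈ S) :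
    x * s ∈ Lk F S (k + 1) :=
  Lk_succ (F := F) S k ▸ mul_mem_mul hx (subset_span (Or.inr hs))

lemma one_mem_Lk (S : Set A) (k : ℕ) : 1 ∈ Lk F S k :=
  Submodule.one_le.1 (one_le_pow_of_one_le' (one_le_span_one_union S) k)

lemma natDegree_minpoly_le_mAlg [FiniteDimensional F A] (s : A) :
    (minpoly F s).natDegree ≤ mAlg F A :=
  le_csSup ⟨finrank F A, by rintro _ ⟨τ, rfl⟩; exact minpoly.natDegree_le τ⟩ ⟨s, rfl⟩

lemma mAlg_le_card {ι : Type*} [Fintype ι] [DecidableEq ι] (C : Subalgebra F (Matrix ι ι F)) :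
    mAlg F C ≤ Fintype.card ι := by
  refine csSup_le ⟨_, 0, rfl⟩ ?_
  rintro _ ⟨τ, rfl⟩
  have hroot : Polynomial.aeval τ (τ : Matrix ι ι F).charpoly = 0 :=
    Subtype.val_injective
      ((Polynomial.aeval_subalgebra_coe _ _ τ).trans (Matrix.aeval_self_charpoly _))
  rw [← (τ : Matrix ι ι F).charpoly_natDegree_eq_dim]
  exact Polynomial.natDegree_le_of_dvd (minpoly.dvd F τ hroot) (Matrix.charpoly_monic _).ne_zero

lemma Lk_eq_top_of_Lk_succ_le {S : Set A} (hS : Algebra.adjoin F S = ⊤) {m : ℕ}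
    (h : Lk F S (m + 1) ≤ Lk F S m) : Lk F S m = ⊤ := by
  have hle : ∀ j, Lk F S j ≤ Lk F S m := pow_le_pow_of_pow_succ_le (one_le_span_one_union S) h
  have hmul : ∀ x y, x ∈ Lk F S m → y ∈ Lk F S m → x * y ∈ Lk F S m := fun x y hx hy =>
    hle (m + m) (by rw [Lk, pow_add]; exact mul_mem_mul hx hy)
  have hadjoin : Algebra.adjoin F S ≤ (Lk F S m).toSubalgebra (one_mem_Lk S m) hmul :=
    Algebra.adjoin_le fun x hx => hle 1 (by simpa using mul_mem_Lk_succ (one_mem_Lk S 0) hx)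
  exact eq_top_iff.2 fun x _ => hadjoin (hS ▸ Algebra.mem_top)

theorem Lk_max_eq_top [FiniteDimensional F A] {S : Set A} (hS : Algebra.adjoin F S = ⊤) :
    Lk F S (max (mAlg F A - 1) (finrank F A / 2)) = ⊤ := by
  have h1 := one_le_span_one_union (F := F) S
  refine Lk_eq_top_of_Lk_succ_le hS (pow_succ_le_pow_of_finrank_le h1 (by omega) fun s hs => ?_)
  have := natDegree_minpoly_le_mAlg (F := F) s
  exact pow_succ_mem_of_natDegree_minpoly_le h1 hs (Algebra.IsIntegral.isIntegral s) (by omega)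

theorem lenS_le_max [FiniteDimensional F A] {S : Set A} (hS : Algebra.adjoin F S = ⊤) :
    lenS F S ≤ max (mAlg F A - 1) (finrank F A / 2) :=
  Nat.sInf_le (Lk_max_eq_top hS)

lemma Lk_lenS [FiniteDimensional F A] {S : Set A} (hS : Algebra.adjoin F S = ⊤) :
    Lk F S (lenS F S) = ⊤ :=
  Nat.sInf_mem (s := {k | Lk F S k = ⊤}) ⟨_, Lk_max_eq_top hS⟩

lemma prod_alternatingWord_succ {M : Type*} [Monoid M] (a b : M) (k : ℕ) :
    (alternatingWord a b (k + 1)).prod = (alternatingWord b a k).prod * b := by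
  simp [alternatingWord_succ]

lemma prod_alternatingWord_mem_Lk {S : Set A} {a b : A} (ha : a ∈ S) (hb : b ∈ S) (k : ℕ) :
    (alternatingWord a b k).prod ∈ Lk F S k := by
  induction k generalizing a b with
  | zero => exact one_mem_Lk S 0
  | succ k ih => exact prod_alternatingWord_succ a b k ▸ mul_mem_Lk_succ (ih hb ha) hb

lemma prod_alternatingWord_succ_mul_mem_Lk {S : Set A} {a b : A} (ha : a ∈ S) (hb : b ∈ S)
    (hbb : b * b = 1) (k : ℕ) : (alternatingWord a b (k + 1)).prod * b ∈ Lk F S k := by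
  rw [prod_alternatingWord_succ, mul_assoc, hbb, mul_one]
  exact prod_alternatingWord_mem_Lk hb ha k

lemma Lk_succ_le_sup_span_alternatingWord {a b : A} (ha : a * a = 1) (hb : b * b = 1) (k : ℕ) :
    Lk F {a, b} (k + 1) ≤ Lk F {a, b} k ⊔
      span F {(alternatingWord a b (k + 1)).prod, (alternatingWord b a (k + 1)).prod} := by
  have haS : a ∈ ({a, b} : Set A) := by simp
  have hbS : b ∈ ({a, b} : Set A) := by simp
  induction k with
  | zero =>
    simp only [Lk, zero_add, pow_one, pow_zero, span_union, Submodule.one_eq_span]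
    exact sup_le_sup_left (span_mono (by simp [alternatingWord, Set.pair_comm])) _
  | succ k ih =>
    have hword : ∀ w ∈ ({(alternatingWord a b (k + 1)).prod,
        (alternatingWord b a (k + 1)).prod} : Set A), w ∈ Lk F {a, b} (k + 1) := by
      rintro _ (rfl | rfl)
      · exact prod_alternatingWord_mem_Lk haS hbS _
      · exact prod_alternatingWord_mem_Lk hbS haS _
    have hmono := Lk_mono (F := F) {a, b} k.le_succ
    refine (Lk_succ _ (k + 1)).trans_le ((mul_le_mul_left ih _).trans ?_)
    rw [Submodule.sup_mul, ← Lk_succ, span_mul_span]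
    refine sup_le le_sup_left (span_le.2 ?_)
    rintro _ ⟨w, hw, c, rfl | rfl | rfl, rfl⟩
    · simpa using mem_sup_left (hword w hw)
    · rcases hw with rfl | rfl
      · exact mem_sup_right (subset_span (Or.inr (prod_alternatingWord_succ ..).symm))
      · exact mem_sup_left (hmono (prod_alternatingWord_succ_mul_mem_Lk hbS haS ha k))
    · rcases hw with rfl | rfl
      · exact mem_sup_left (hmono (prod_alternatingWord_succ_mul_mem_Lk haS hbS hb k))
      · exact mem_sup_right (subset_span (Or.inl (prod_alternatingWord_succ ..).symm))

lemma finiteDimensional_Lk {S : Set A} (hS : S.Finite) (k : ℕ) :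
    FiniteDimensional F ↥(Lk F S k) :=
  Module.Finite.iff_fg.2 ((fg_span ((Set.finite_singleton 1).union hS)).pow k)

lemma finrank_Lk_pair_le {a b : A} (ha : a * a = 1) (hb : b * b = 1) (k : ℕ) :
    finrank F ↥(Lk F {a, b} k) ≤ 2 * k + 1 := by
  induction k with
  | zero =>
    rw [Lk, pow_zero, Submodule.one_eq_span]
    exact (finrank_span_le_card {(1 : A)}).trans (by simp)
  | succ k ih =>
    set W := span F {(alternatingWord a b (k + 1)).prod, (alternatingWord b a (k + 1)).prod}
    have : FiniteDimensional F ↥(Lk F {a, b} k) := finiteDimensional_Lk (Set.toFinite _) k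
    have : FiniteDimensional F W := FiniteDimensional.span_of_finite F (Set.toFinite _)
    have hW : finrank F W ≤ 2 := by
      classical
      exact (finrank_span_le_card _).trans (by simpa using Finset.card_le_two)
    calc finrank F ↥(Lk F {a, b} (k + 1)) ≤ finrank F ↥(Lk F {a, b} k ⊔ W) :=
          finrank_mono (Lk_succ_le_sup_span_alternatingWord ha hb k)
      _ ≤ finrank F ↥(Lk F {a, b} k) + finrank F W := finrank_add_le_finrank_add_finrank _ _
      _ ≤ 2 * (k + 1) + 1 := by omega

lemma finrank_le_two_mul_lenS_add_one [FiniteDimensional F A] {a b : A} (ha : a * a = 1)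
    (hb : b * b = 1) (hab : Algebra.adjoin F {a, b} = ⊤) :
    finrank F A ≤ 2 * lenS F {a, b} + 1 := by
  have h := finrank_Lk_pair_le (F := F) ha hb (lenS F {a, b})
  rwa [Lk_lenS hab, finrank_top] at h

end Length

/-! ### Bicirculant matrices over a finite abelian group -/

section Anticirculant

variable {G α : Type*}

/-- The anti-circulant matrix generated by `v`: the counterpart of `Matrix.circulant` whose
`(i, j)` entry depends only on `i + j`. -/
def anticirculant [Add G] (v : G → α) : Matrix G G α :=
  of fun i j => v (i + j)

lemma anticirculant_apply [Add G] (v : G → α) (i j : G) : anticirculant v i j = v (i + j) := rfl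

variable [AddCommGroup G] [Fintype G]

lemma circulant_mul_anticirculant [NonUnitalNonAssocSemiring α] (v w : G → α) :
    circulant v * anticirculant w = anticirculant (circulant v *ᵥ w) := by
  ext i j
  refine Fintype.sum_equiv (Equiv.addRight j) _ _ fun k => ?_
  simp [anticirculant_apply]

lemma anticirculant_mul_circulant [NonUnitalNonAssocSemiring α] (v w : G → α) :
    anticirculant v * circulant w = anticirculant (anticirculant v *ᵥ w) := by
  ext i j
  refine Fintype.sum_equiv (Equiv.subRight j) _ _ fun k => ?_
  simp [anticirculant_apply]

lemma anticirculant_mul_anticirculant [NonUnitalNonAssocSemiring α] (v w : G → α) :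
    anticirculant v * anticirculant w = circulant (anticirculant v *ᵥ w) := by
  ext i j
  refine Fintype.sum_equiv (Equiv.addRight j) _ _ fun k => ?_
  simp [anticirculant_apply, sub_add_add_cancel]

variable [DecidableEq G]

lemma circulant_mul_anticirculant_single [NonAssocSemiring α] (v : G → α) (h : G) :
    circulant v * anticirculant (Pi.single h 1) = anticirculant fun x => v (x - h) := by
  rw [circulant_mul_anticirculant, mulVec_single_one]
  rfl

lemma anticirculant_single_mul_anticirculant_single [NonAssocSemiring α] (g h : G) :
    anticirculant (Pi.single g (1 : α)) * anticirculant (Pi.single h 1) =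
      circulant (Pi.single (g - h) 1) := by
  rw [anticirculant_mul_anticirculant, mulVec_single_one]
  congr 1 with x
  simp [anticirculant_apply, Pi.single_apply, eq_sub_iff_add_eq]

lemma circulant_single_pow [Semiring α] (g : G) (m : ℕ) :
    circulant (Pi.single g (1 : α)) ^ m = circulant (Pi.single (m • g) 1) := by
  induction m with
  | zero => simp
  | succ m ih =>
    rw [pow_succ, ih, circulant_mul, mulVec_single_one]
    congr 1 with x
    simp [Pi.single_apply, succ_nsmul, sub_eq_iff_eq_add]

end Anticirculant

section BicirculantAlgebra

variable (R G : Type*) [CommSemiring R] [AddCommGroup G]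

/-- The parametrization of bicirculant matrices by pairs of vectors: the sum of the circulant
matrix of the first vector and the anti-circulant matrix of the second. -/
def bicirculant : (G → R) × (G → R) →ₗ[R] Matrix G G R where
  toFun c := circulant c.1 + anticirculant c.2
  map_add' c d := by ext i j; simp [anticirculant_apply, add_add_add_comm]
  map_smul' r c := by ext i j; simp [anticirculant_apply, mul_add]

variable {R G} in
lemma bicirculant_apply (c : (G → R) × (G → R)) :
    bicirculant R G c = circulant c.1 + anticirculant c.2 := rfl

variable [Fintype G] [DecidableEq G]

/-- The algebra of bicirculant matrices. For `G = Fin n` it is the algebra `C_n(R)` generated by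
`A_n` and `B_n`; for a general group it is the image of the group algebra of the generalized
dihedral group of `G` acting on functions on `G`. -/
def bicirculantAlgebra : Subalgebra R (Matrix G G R) :=
  (LinearMap.range (bicirculant R G)).toSubalgebra
    ⟨(Pi.single 0 1, 0), by ext; simp [bicirculant_apply, anticirculant_apply]⟩ <| by
    rintro _ _ ⟨⟨a, b⟩, rfl⟩ ⟨⟨c, d⟩, rfl⟩
    refine ⟨(circulant a *ᵥ c + anticirculant b *ᵥ d, circulant a *ᵥ d + anticirculant b *ᵥ c), ?_⟩
    have hadd (v w : G → R) : anticirculant (v + w) = anticirculant v + anticirculant w := rfl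
    simp only [bicirculant_apply, add_mul, mul_add, circulant_mul, circulant_mul_anticirculant,
      anticirculant_mul_circulant, anticirculant_mul_anticirculant, circulant_add, hadd]
    abel

variable {R G}

lemma circulant_mem_bicirculantAlgebra (v : G → R) : circulant v ∈ bicirculantAlgebra R G :=
  ⟨(v, 0), by ext; simp [bicirculant_apply, anticirculant_apply]⟩

lemma anticirculant_mem_bicirculantAlgebra (v : G → R) :
    anticirculant v ∈ bicirculantAlgebra R G :=
  ⟨(0, v), by simp [bicirculant_apply]⟩

lemma bicirculantAlgebra_le {g : G} (hg : ∀ x, x ∈ AddSubmonoid.multiples g) {h : G}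
    {T : Subalgebra R (Matrix G G R)} (hrot : circulant (Pi.single g 1) ∈ T)
    (hrefl : anticirculant (Pi.single h 1) ∈ T) : bicirculantAlgebra R G ≤ T := by
  have hcirc (v : G → R) : circulant v ∈ T := by
    have hsum : circulant v = ∑ x, v x • circulant (Pi.single x (1 : R)) := by
      ext i j
      simp [Matrix.sum_apply, Pi.single_apply]
    rw [hsum]
    refine sum_mem fun x _ => T.smul_mem ?_ _
    obtain ⟨m, rfl⟩ := hg x
    exact circulant_single_pow (α := R) g m ▸ pow_mem hrot m
  have hanti (v : G → R) : anticirculant v ∈ T := by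
    have hprod : anticirculant v =
        circulant (fun x => v (x + h)) * anticirculant (Pi.single h 1) := by
      simp [circulant_mul_anticirculant_single]
    exact hprod ▸ mul_mem (hcirc _) hrefl
  rintro _ ⟨c, rfl⟩
  exact add_mem (hcirc c.1) (hanti c.2)

lemma adjoin_rotation_reflection {g : G} (hg : ∀ x, x ∈ AddSubmonoid.multiples g) (h : G) :
    Algebra.adjoin R {circulant (Pi.single g (1 : R)), anticirculant (Pi.single h 1)} =
      bicirculantAlgebra R G := by
  refine le_antisymm (Algebra.adjoin_le ?_) (bicirculantAlgebra_le hg (h := h) ?_ ?_)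
  · rintro _ (rfl | rfl)
    · exact circulant_mem_bicirculantAlgebra _
    · exact anticirculant_mem_bicirculantAlgebra _
  all_goals exact Algebra.subset_adjoin (by simp)

variable (R) in
/-- The permutation matrix of the involution `x ↦ h - x` of `G`, as an element of the bicirculant
algebra. -/
def bicirculantReflection (h : G) : bicirculantAlgebra R G :=
  ⟨anticirculant (Pi.single h 1), anticirculant_mem_bicirculantAlgebra _⟩

lemma bicirculantReflection_mul_self (h : G) :
    bicirculantReflection R h * bicirculantReflection R h = 1 := by
  apply Subtype.ext
  simp [bicirculantReflection, anticirculant_single_mul_anticirculant_single]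

lemma adjoin_bicirculantReflection {g : G} (hg : ∀ x, x ∈ AddSubmonoid.multiples g) (h : G) :
    Algebra.adjoin R {bicirculantReflection R (g + h), bicirculantReflection R h} = ⊤ := by
  set T := Algebra.adjoin R {bicirculantReflection R (g + h), bicirculantReflection R h}
  have hgh : bicirculantReflection R (g + h) ∈ T := Algebra.subset_adjoin (by simp)
  have hh : bicirculantReflection R h ∈ T := Algebra.subset_adjoin (by simp)
  have hle : bicirculantAlgebra R G ≤ T.map (bicirculantAlgebra R G).val := by
    refine bicirculantAlgebra_le hg (h := h) ⟨_, mul_mem hgh hh, ?_⟩ ⟨_, hh, rfl⟩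
    simp [bicirculantReflection, anticirculant_single_mul_anticirculant_single]
  rw [eq_top_iff]
  intro x _
  obtain ⟨y, hy, hyx⟩ := hle x.2
  exact Subtype.val_injective hyx ▸ hy

end BicirculantAlgebra

section BicirculantLength

variable {F G : Type*} [Field F] [AddCommGroup G]

lemma one_le_finrank_ker_bicirculant [Finite G] :
    1 ≤ finrank F (LinearMap.ker (bicirculant F G)) := by
  rw [Submodule.one_le_finrank_iff, Submodule.ne_bot_iff]
  refine ⟨(1, -1), ?_, fun h => ?_⟩
  · ext i j
    simp [bicirculant_apply, anticirculant_apply]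
  · simpa using congrFun (congrArg Prod.fst h) 0

/- If `(c, d)` is in the kernel then `d (x + g + g) = -c x = d x`, so `d` is determined by its
values at `0` and `g`, and `d` determines `c`. -/
lemma finrank_ker_bicirculant_le {g : G} (hg : ∀ x, x ∈ AddSubmonoid.multiples g) :
    finrank F (LinearMap.ker (bicirculant F G)) ≤ 2 := by
  let e : LinearMap.ker (bicirculant F G) →ₗ[F] F × F :=
    (LinearMap.proj (R := F) (φ := fun _ : G => F) 0).prod (LinearMap.proj g) ∘ₗ
      LinearMap.snd F (G → F) (G → F) ∘ₗ Submodule.subtype _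
  have he : Function.Injective e := by
    rw [injective_iff_map_eq_zero]
    rintro ⟨⟨c, d⟩, hcd⟩ h0
    have hd0 : d 0 = 0 ∧ d g = 0 := by simpa [e] using h0
    have hzero : bicirculant F G (c, d) = 0 := LinearMap.mem_ker.1 hcd
    have hker (i j : G) : c (i - j) + d (i + j) = 0 := congrFun (congrFun hzero i) j
    have hper (x : G) : d (x + g + g) = d x := by
      have h1 := hker (x + g) g
      have h2 := hker x 0
      rw [add_sub_cancel_right] at h1
      rw [sub_zero, add_zero] at h2
      exact add_left_cancel (h1.trans h2.symm)
    have hmul (m : ℕ) : d (m • g) = 0 ∧ d (m • g + g) = 0 := by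
      induction m with
      | zero => simpa using hd0
      | succ m ih =>
        rw [succ_nsmul, hper]
        exact ⟨ih.2, ih.1⟩
    have hd : d = 0 := by
      ext x
      obtain ⟨m, rfl⟩ := hg x
      exact (hmul m).1
    have hc : c = 0 := by
      ext x
      simpa [hd] using hker x 0
    simp [hc, hd]
  simpa using LinearMap.finrank_le_finrank_of_injective he

variable [Fintype G] [DecidableEq G]

lemma finrank_bicirculantAlgebra_add_finrank_ker :
    finrank F (bicirculantAlgebra F G) + finrank F (LinearMap.ker (bicirculant F G)) =
      2 * Fintype.card G := by
  have h := (bicirculant F G).finrank_range_add_finrank_ker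
  rwa [finrank_prod, finrank_fintype_fun_eq_card, ← two_mul] at h

theorem lenS_bicirculantAlgebra_le {S : Set (bicirculantAlgebra F G)}
    (hS : Algebra.adjoin F S = ⊤) : lenS F S ≤ Fintype.card G - 1 := by
  have hm := mAlg_le_card (bicirculantAlgebra F G)
  have hker := one_le_finrank_ker_bicirculant (F := F) (G := G)
  have hdim := finrank_bicirculantAlgebra_add_finrank_ker (F := F) (G := G)
  exact (lenS_le_max hS).trans (max_le (by omega) (by omega))

theorem lenS_bicirculantReflection {g : G} (hg : ∀ x, x ∈ AddSubmonoid.multiples g) (h : G) :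
    lenS F {bicirculantReflection F (g + h), bicirculantReflection F h} = Fintype.card G - 1 := by
  have hgen := adjoin_bicirculantReflection (R := F) hg h
  have hlen := finrank_le_two_mul_lenS_add_one (bicirculantReflection_mul_self _)
    (bicirculantReflection_mul_self _) hgen
  have hker := finrank_ker_bicirculant_le (F := F) hg
  have hdim := finrank_bicirculantAlgebra_add_finrank_ker (F := F) (G := G)
  exact le_antisymm (lenS_bicirculantAlgebra_le hgen) (by omega)

end BicirculantLength

section Generators

variable {F : Type*} [Field F] {n : ℕ} [NeZero n]

lemma Acirc_eq_circulant : Acirc n F = circulant (Pi.single (-1) 1) := by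
  ext i j
  have hij : (j : ℕ) = ((i : ℕ) + 1) % n ↔ i - j = -1 := by
    rw [sub_eq_iff_eq_add, eq_neg_add_iff_add_eq, add_comm 1, eq_comm, Fin.ext_iff, Fin.val_add,
      Fin.val_one', Nat.add_mod_mod]
  simp [Acirc, Pi.single_apply, hij]

lemma Bcirc_eq_anticirculant : Bcirc n F = anticirculant (Pi.single (-1) 1) := by
  ext i j
  have hij : (i : ℕ) + (j : ℕ) = n - 1 ↔ i + j = -1 := by
    rw [eq_neg_iff_add_eq_zero, Fin.ext_iff, Fin.val_add, Fin.val_add, Fin.val_one',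
      Nat.add_mod_mod, Nat.mod_add_mod, Fin.val_zero, ← Nat.dvd_iff_mod_eq_zero]
    constructor
    · intro h
      exact dvd_of_eq (by omega)
    · intro h
      have := Nat.eq_of_dvd_of_lt_two_mul (by omega) h (by omega)
      omega
  simp [Bcirc, anticirculant_apply, Pi.single_apply, hij]

open Fin.CommRing in
lemma mem_multiples_neg_one (x : Fin n) : x ∈ AddSubmonoid.multiples (-1 : Fin n) :=
  ⟨(-x).val, by simp⟩

lemma adjoin_Acirc_Bcirc :
    Algebra.adjoin F {Acirc n F, Bcirc n F} = bicirculantAlgebra F (Fin n) := by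
  rw [Acirc_eq_circulant, Bcirc_eq_anticirculant]
  exact adjoin_rotation_reflection mem_multiples_neg_one _

end Generators

theorem stmt_6 (F : Type*) [Field F] (n : ℕ) (hn : 3 ≤ n) :
    (∀ S : Set ↥(Algebra.adjoin F ({Acirc n F, Bcirc n F} : Set (Matrix (Fin n) (Fin n) F))),
        Algebra.adjoin F S = ⊤ → lenS F S ≤ n - 1) ∧
    ∃ S : Set ↥(Algebra.adjoin F ({Acirc n F, Bcirc n F} : Set (Matrix (Fin n) (Fin n) F))),
        Algebra.adjoin F S = ⊤ ∧ lenS F S = n - 1 := by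
  have : NeZero n := ⟨by omega⟩
  rw [adjoin_Acirc_Bcirc]
  refine ⟨fun S hS => (lenS_bicirculantAlgebra_le hS).trans_eq (by simp), _,
    adjoin_bicirculantReflection mem_multiples_neg_one 0, ?_⟩
  simpa using lenS_bicirculantReflection (F := F) (mem_multiples_neg_one (n := n)) 0
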